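/- Fix a real number c with 0 < c < 1 and set β₃ = (c√(1−c²) + √(3−8c+6c²−c⁴))/2. Then ψ₄(t,β₃) ≤ 0 for all t ∈ [−1,1], and for every ξ > 0 such that ψ₄(t,ξ) ≤ 0 for all t ∈ [−1,1], sup over t ∈ [−1,1] of |ψ₄(t,ξ)| is at least sup over t ∈ [−1,1] of |ψ₄(t,β₃)|; i.e., ξ∨ = β₃ induces the optimal inner quartic G² approximant. -/

import Mathlib

noncomputable def alpha1 (c : ℝ) : ℝ := -(Real.sqrt (1 - c^2)/2) * (Real.sqrt (3 + c^2) + c)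
noncomputable def alpha2 (c : ℝ) : ℝ := (Real.sqrt (1 - c^2)/2) * (Real.sqrt (3 + c^2) - c)
noncomputable def beta1 (c : ℝ) : ℝ :=
  (c*Real.sqrt (1 - c^2) - Real.sqrt (3 + 8*c + 6*c^2 - c^4))/2
noncomputable def beta2 (c : ℝ) : ℝ :=
  (c*Real.sqrt (1 - c^2) - Real.sqrt (3 - 8*c + 6*c^2 - c^4))/2
noncomputable def beta3 (c : ℝ) : ℝ :=
  (c*Real.sqrt (1 - c^2) + Real.sqrt (3 - 8*c + 6*c^2 - c^4))/2
noncomputable def beta4 (c : ℝ) : ℝ :=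
  (c*Real.sqrt (1 - c^2) + Real.sqrt (3 + 8*c + 6*c^2 - c^4))/2

/-- Simplified radial error of the quartic G² Bézier approximant of the unit circular arc. -/
noncomputable def psi4 (c t ξ : ℝ) : ℝ :=
  ((t^2 - 1)^3/(64*c^2)) *
    (16*(ξ - alpha1 c)^2*(ξ - alpha2 c)^2*t^2
      - 16*(ξ - beta1 c)*(ξ - beta2 c)*(ξ - beta3 c)*(ξ - beta4 c))

/-- Sup over `t ∈ [−1,1]` of `|f t|`. -/
noncomputable def errSup (f : ℝ → ℝ) : ℝ :=
  sSup ((fun t => |f t|) '' Set.Icc (-1 : ℝ) 1)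

lemma aux_max (x : ℝ) (hx : 0 ≤ x) : (1 - x)^3 * x ≤ 27/256 := by
  have : 27/256 - (1-x)^3*x = (x-1/4)^2*((x-5/4)^2+1/8) := by ring
  have h2 : 0 ≤ (x-1/4)^2*((x-5/4)^2+1/8) := by positivity
  linarith

lemma aux_key (c a b d p Q h δ : ℝ) (hc0 : 0 < c) (hc1 : c < 1) (ha : 0 < a) (hb : 0 < b)
    (hd : 0 < d) (ha2 : a^2 = 1 - c) (hb2 : b^2 = 1 + c) (hd2 : d^2 = 3 + c) (hp0 : 0 ≤ p)
    (hpu : p ≤ c*(1-c)^2*(1/2)) (hh0 : 0 ≤ h) (hQ0 : 0 ≤ Q) (hQ4 : Q ≤ 4*c)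
    (hQh : Q = h * (h + a^3*d)) (hδ : δ = Q + 2*c*(a*b)*h) (hδ0 : 0 ≤ δ) (hδQ : Q ≤ δ) :
    (-p)^2 ≤ (-p+δ)^2 - 4*(Q*(Q-4*c)) := by
  have h44 : 0 ≤ Q*(4*c-Q) := mul_nonneg hQ0 (by linarith)
  rcases le_or_gt (2*p) δ with h2 | h2
  · linarith [mul_nonneg hδ0 (sub_nonneg.2 h2)]
  · have hp1 : p ≤ c/2 := by
      have h9 : (1-c)^2 ≤ 1 := by nlinarith only [hc0, hc1]
      linarith [mul_le_mul_of_nonneg_left h9 hc0.le]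
    have hp2 : p * (a*b) ≤ a^3*d := by
      have hbd' : b ≤ d := by nlinarith only [hb2, hd2, hb, hd]
      have h5 : p ≤ a^2 := by
        rw [ha2]; nlinarith only [hpu, hc0, hc1, mul_pos hc0 (sub_pos.2 hc1), mul_nonneg hc0.le (sq_nonneg (1-c)), mul_pos (mul_pos hc0 (sub_pos.2 hc1)) hc0]
      calc p*(a*b) ≤ a^2*(a*d) := by gcongr
        _ = a^3*d := by ring
    have hQR : (a^3*d)*h ≤ Q := by rw [hQh]; nlinarith only [sq_nonneg h]
    have h6 : p*(a*b)*h ≤ Q := le_trans (by gcongr) hQR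
    have h7 : 8*c*Q ≤ 4*(Q*(4*c-Q)) := by nlinarith only [mul_nonneg hQ0 (show 0 ≤ 2*c - Q by linarith)]
    have h8 : 2*p*δ ≤ 8*c*Q := by
      rw [hδ]; linarith [mul_le_mul_of_nonneg_left h6 hc0.le, mul_le_mul_of_nonneg_right hp1 hQ0, mul_nonneg hc0.le hQ0]
    linarith [sq_nonneg δ]


/-- Core inequality. -/
lemma aux_core (c a b d ξ : ℝ) (hc0 : 0 < c) (hc1 : c < 1) (ha : 0 < a) (hb : 0 < b) (hd : 0 < d)
    (ha2 : a^2 = 1 - c) (hb2 : b^2 = 1 + c) (hd2 : d^2 = 3 + c) (hξ : 0 < ξ)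
    (Q : ℝ) (β : ℝ) (hβ : β = (c*(a*b) + a^3*d)/2)
    (hQ : Q = (ξ - β) * (ξ - (c*(a*b) - a^3*d)/2)) (hB : Q * (Q - 4*c) ≤ 0) :
    (β^2 + c*(a*b)*β - 3*(1-c^2)/4)^2 ≤
      (ξ^2 + c*(a*b)*ξ - 3*(1-c^2)/4)^2 - 4 * (Q * (Q - 4*c)) := by
  have hab : 0 < a*b := by positivity
  have had : 0 < a^3*d := by positivity
  have hR : (a^3*d)^2 = (1-c)^3*(3+c) := by
    rw [← ha2, ← hd2]; ring
  have hs : (a*b)^2 = 1 - c^2 := by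
    have : (a*b)^2 = a^2*b^2 := by ring
    rw [this, ha2, hb2]; ring
  obtain ⟨p, hp⟩ : ∃ p, p = c*(1-c)^2*((2+c) - b*d) := ⟨_, rfl⟩
  have hbd2 : (b*d)^2 = (2+c)^2 - 1 := by
    have : (b*d)^2 = b^2*d^2 := by ring
    rw [this, hb2, hd2]; ring
  have hbd : 0 < b*d := by positivity
  have hbdle : b*d ≤ 2 + c := by nlinarith
  have hbdge : 3/2 + c ≤ b*d := by nlinarith
  have hp0 : 0 ≤ p := by
    rw [hp]; have : 0 ≤ (2+c) - b*d := by linarith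
    positivity
  have hpu : p ≤ c*(1-c)^2*(1/2) := by
    rw [hp]; gcongr; linarith
  have hP3 : β^2 + c*(a*b)*β - 3*(1-c^2)/4 = -p := by
    have e : a*b*(a^3*d) = (1-c)^2*(b*d) := by rw [← ha2]; ring
    rw [hp, hβ]
    linear_combination (3/4*c^2)*hs + (1/4)*hR + c*e
  have hP : ξ^2 + c*(a*b)*ξ - 3*(1-c^2)/4 = -p + Q + 2*c*(a*b)*(ξ-β) := by
    have h1 : Q = ξ^2 - c*(a*b)*ξ - β^2 + c*(a*b)*β := by
      rw [hQ, hβ]; ring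
    rw [← hP3, h1]; ring
  rw [hP, hP3]
  have hQ0 : 0 ≤ Q := by
    by_contra h; push Not at h
    exact absurd hB (not_le.2 (mul_pos_of_neg_of_neg h (by linarith)))
  have hQ4 : Q ≤ 4*c := by
    by_contra h; push Not at h
    exact absurd hB (not_le.2 (mul_pos (by linarith) (by linarith)))
  rcases le_or_gt β ξ with hge | hlt
  · obtain ⟨h, hh⟩ : ∃ h, h = ξ - β := ⟨_, rfl⟩
    have hh0 : 0 ≤ h := by linarith
    have hQh : Q = h * (h + a^3*d) := by rw [hQ, hh, hβ]; ring
    rw [← hh]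
    obtain ⟨δ, hδ⟩ : ∃ δ, δ = Q + 2*c*(a*b)*h := ⟨_, rfl⟩
    have hδ0 : 0 ≤ δ := by rw [hδ]; positivity
    have hδQ : Q ≤ δ := by
      have : 0 ≤ 2*c*(a*b)*h := by positivity
      linarith
    have key := aux_key c a b d p Q h δ hc0 hc1 ha hb hd ha2 hb2 hd2 hp0 hpu hh0 hQ0 hQ4 hQh hδ hδ0 hδQ
    rw [hδ] at key
    convert key using 2
    ring
  · have hle : -p + Q + 2*c*(a*b)*(ξ-β) ≤ -p := by
      rw [← hP, ← hP3]
      have hβ0 : 0 < β := by linarith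
      have : 0 < c*(a*b) := by positivity
      nlinarith only [this, hβ0, hξ, hlt, mul_pos this (sub_pos.2 hlt)]
    nlinarith only [hle, hp0, hB]

lemma aux_psi (c a b d t ξ : ℝ) (hc0 : 0 < c) (hc1 : c < 1) (ha : 0 < a) (hb : 0 < b) (hd : 0 < d)
    (ha2 : a^2 = 1 - c) (hb2 : b^2 = 1 + c) (hd2 : d^2 = 3 + c) :
    beta3 c = (c*(a*b) + a^3*d)/2 ∧
    psi4 c t ξ = -((1 - t^2)^3/(4*c^2)) * ((ξ^2 + c*(a*b)*ξ - 3*(1-c^2)/4)^2*t^2 -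
      ((ξ - beta3 c) * (ξ - (c*(a*b) - a^3*d)/2)) *
      ((ξ - beta3 c) * (ξ - (c*(a*b) - a^3*d)/2) - 4*c)) := by
  have hR : (a^3*d)^2 = (1-c)^3*(3+c) := by
    rw [← ha2, ← hd2]; ring
  have hs : (a*b)^2 = 1 - c^2 := by
    have : (a*b)^2 = a^2*b^2 := by ring
    rw [this, ha2, hb2]; ring
  have e1 : Real.sqrt (1 - c^2) = a*b := by
    rw [← hs]; exact Real.sqrt_sq (by positivity)
  have e2 : Real.sqrt (3 - 8*c + 6*c^2 - c^4) = a^3*d := by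
    have : 3 - 8*c + 6*c^2 - c^4 = (a^3*d)^2 := by rw [hR]; ring
    rw [this]; exact Real.sqrt_sq (by positivity)
  have hw : Real.sqrt (3 + c^2)^2 = 3 + c^2 := Real.sq_sqrt (by positivity)
  have hz : Real.sqrt (3 + 8*c + 6*c^2 - c^4)^2 = 3 + 8*c + 6*c^2 - c^4 :=
    Real.sq_sqrt (by nlinarith [pow_pos hc0 2, pow_le_one₀ hc0.le hc1.le (n := 4)])
  have h3 : beta3 c = (c*(a*b) + a^3*d)/2 := by rw [beta3, e1, e2]
  refine ⟨h3, ?_⟩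
  have h2 : beta2 c = (c*(a*b) - a^3*d)/2 := by rw [beta2, e1, e2]
  have hA : (ξ - alpha1 c) * (ξ - alpha2 c) = ξ^2 + c*(a*b)*ξ - 3*(1-c^2)/4 := by
    rw [alpha1, alpha2, e1]
    linear_combination (-(a*b)^2/4)*hw - 3/4*hs
  have hBB : (ξ - beta1 c) * (ξ - beta4 c) =
      (ξ - beta3 c) * (ξ - (c*(a*b) - a^3*d)/2) - 4*c := by
    rw [beta1, beta4, h3, e1]
    linear_combination (-1/4)*hz + (1/4)*hR
  rw [← hBB, ← hA, ← h2, psi4]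
  field_simp
  ring

/-- `ξ∨ = β₃` induces the optimal inner quartic G² approximant. -/
theorem stmt_9 (c : ℝ) (hc0 : 0 < c) (hc1 : c < 1) :
    (∀ t ∈ Set.Icc (-1 : ℝ) 1, psi4 c t (beta3 c) ≤ 0) ∧
    ∀ ξ > (0 : ℝ), (∀ t ∈ Set.Icc (-1 : ℝ) 1, psi4 c t ξ ≤ 0) →
      errSup (fun t => psi4 c t (beta3 c)) ≤ errSup (fun t => psi4 c t ξ) := by
  obtain ⟨a, ha, ha2⟩ : ∃ a : ℝ, 0 < a ∧ a^2 = 1 - c :=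
    ⟨Real.sqrt (1-c), Real.sqrt_pos.2 (by linarith), Real.sq_sqrt (by linarith)⟩
  obtain ⟨b, hb, hb2⟩ : ∃ a : ℝ, 0 < a ∧ a^2 = 1 + c :=
    ⟨Real.sqrt (1+c), Real.sqrt_pos.2 (by linarith), Real.sq_sqrt (by linarith)⟩
  obtain ⟨d, hd, hd2⟩ : ∃ a : ℝ, 0 < a ∧ a^2 = 3 + c :=
    ⟨Real.sqrt (3+c), Real.sqrt_pos.2 (by linarith), Real.sq_sqrt (by linarith)⟩
  have hpsi := fun t ξ => (aux_psi c a b d t ξ hc0 hc1 ha hb hd ha2 hb2 hd2).2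
  have hβ := (aux_psi c a b d 0 0 hc0 hc1 ha hb hd ha2 hb2 hd2).1
  have hcont : ∀ ξ, Continuous (fun t => psi4 c t ξ) := by
    intro ξ; unfold psi4; fun_prop
  generalize beta3 c = β at *
  have hpsi3 : ∀ t, psi4 c t β = -((1 - t^2)^3*t^2/(4*c^2) * (β^2 + c*(a*b)*β - 3*(1-c^2)/4)^2) := by
    intro t; rw [hpsi]; ring
  have hnn : ∀ t ∈ Set.Icc (-1 : ℝ) 1,
      0 ≤ (1 - t^2)^3*t^2/(4*c^2) * (β^2 + c*(a*b)*β - 3*(1-c^2)/4)^2 := by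
    intro t ht
    have : 0 ≤ 1 - t^2 := by nlinarith [ht.1, ht.2]
    positivity
  refine ⟨fun t ht => ?_, fun ξ hξ hin => ?_⟩
  · rw [hpsi3]; linarith [hnn t ht]
  have hB : ((ξ - β) * (ξ - (c*(a*b) - a^3*d)/2)) *
      ((ξ - β) * (ξ - (c*(a*b) - a^3*d)/2) - 4*c) ≤ 0 := by
    have h0 := hin 0 (by constructor <;> norm_num)
    rw [hpsi] at h0
    by_contra hcon
    push Not at hcon
    have : 0 < 1/(4*c^2) * (((ξ - β) * (ξ - (c*(a*b) - a^3*d)/2)) *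
      ((ξ - β) * (ξ - (c*(a*b) - a^3*d)/2) - 4*c)) := mul_pos (by positivity) hcon
    refine absurd (le_trans (le_of_eq ?_) h0) (not_le.2 this)
    ring
  have core := aux_core c a b d ξ hc0 hc1 ha hb hd ha2 hb2 hd2 hξ _ β hβ rfl hB
  have hhalf : |psi4 c (1/2) ξ| ≤ errSup (fun t => psi4 c t ξ) := by
    apply le_csSup
    · exact (isCompact_Icc.image (hcont ξ).abs).bddAbove
    · exact ⟨1/2, by constructor <;> norm_num, rfl⟩
  refine le_trans ?_ hhalf
  apply csSup_le
  · exact ⟨_, 0, by constructor <;> norm_num, rfl⟩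
  rintro _ ⟨t, ht, rfl⟩
  have h1 : |psi4 c t β| ≤ 27/256/(4*c^2) * (β^2 + c*(a*b)*β - 3*(1-c^2)/4)^2 := by
    rw [hpsi3, abs_neg, abs_of_nonneg (hnn t ht)]
    gcongr
    exact aux_max _ (sq_nonneg t)
  refine le_trans h1 (le_trans (mul_le_mul_of_nonneg_left core (by positivity)) ?_)
  refine le_trans (le_of_eq ?_) (neg_le_abs _)
  rw [hpsi]
  ring
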